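/- Let 0 < α ≤ 1 and consider the torus T²_α = (0, 2π/α) × (0, 2π). Let φ_1, …, φ_N : ℝ² → ℝ be C¹ functions, periodic with period 2π/α in x_1 and period 2π in x_2, orthonormal in L²(T²_α), and satisfying ∫_0^{2π} φ_j(x_1, t) dt = 0 for every x_1 and every j. Then ρ(x) := ∑_{j=1}^N φ_j(x)² satisfies ∫_{T²_α} ρ(x)² dx ≤ (π/6) ∑_{j=1}^N ∫_{T²_α} |∇φ_j(x)|² dx. -/

import Mathlib

open Real MeasureTheory

/-- Partial derivative with respect to the first variable. -/
noncomputable def pd1 (f : ℝ × ℝ → ℝ) (x : ℝ × ℝ) : ℝ :=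
  deriv (fun s => f (s, x.2)) x.1

/-- Partial derivative with respect to the second variable. -/
noncomputable def pd2 (f : ℝ × ℝ → ℝ) (x : ℝ × ℝ) : ℝ :=
  deriv (fun t => f (x.1, t)) x.2

/-!
The proof is Rumin's form of the Lieb–Thirring argument. Fix an energy `E > 0` and split every `φ j`
into its Fourier modes with Laplace eigenvalue below `E` and the rest. By Bessel's inequality the
low-energy parts have total density at most (number of modes below `E`) / (area of the torus), which
a lattice point count bounds by `c * E` with `c = π / 36`: the modes constant in the second variable
are absent, so this holds down to `E = 0` and uniformly in `α ≤ 1`. By the triangle inequality the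
high-energy parts have density at least `(√ρ - √(c * E))₊ ^ 2`. Integrating over `E` turns this
lower bound into `ρ ^ 2 / (6 * c)`, while a mode with eigenvalue `λ` is of high energy exactly for
`E ≤ λ`, so that the high-energy parts integrate to the Dirichlet energy. Here `6 * c = π / 6`.
-/

open scoped ENNReal InnerProductSpace ComplexConjugate

section Hilbert

variable {𝕜 H ι κ : Type*} [RCLike 𝕜] [NormedAddCommGroup H] [InnerProductSpace 𝕜 H]

-- The diagonal term already exhausts the Parseval sum, so no off-diagonal inner product ever has to
-- be computed.
theorem orthonormal_of_tsum_enorm_inner_sq_eq_one {e : ι → H} (hunit : ∀ k, ‖e k‖ = 1)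
    (hparseval : ∀ l, ∑' k, ‖⟪e k, e l⟫_𝕜‖ₑ ^ 2 = 1) : Orthonormal 𝕜 e := by
  classical
  refine ⟨hunit, fun k l hkl => ?_⟩
  have hself : ‖⟪e l, e l⟫_𝕜‖ₑ = 1 := by simp [inner_self_eq_norm_sq_to_K, hunit]
  have hpair : 1 + ‖⟪e k, e l⟫_𝕜‖ₑ ^ 2 ≤ 1 + 0 :=
    calc 1 + ‖⟪e k, e l⟫_𝕜‖ₑ ^ 2 = ∑ i ∈ {l, k}, ‖⟪e i, e l⟫_𝕜‖ₑ ^ 2 := by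
          rw [Finset.sum_pair hkl.symm, hself, one_pow]
      _ ≤ ∑' i, ‖⟪e i, e l⟫_𝕜‖ₑ ^ 2 := ENNReal.sum_le_tsum _
      _ = 1 + 0 := by rw [hparseval, add_zero]
  simpa using (ENNReal.add_le_add_iff_left ENNReal.one_ne_top).1 hpair

variable {e : ι → H}

theorem norm_sub_sum_inner_smul_sq (he : Orthonormal 𝕜 e) (S : Finset ι) (x : H) :
    ‖x - ∑ k ∈ S, ⟪e k, x⟫_𝕜 • e k‖ ^ 2 = ‖x‖ ^ 2 - ∑ k ∈ S, ‖⟪e k, x⟫_𝕜‖ ^ 2 := by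
  have hcross : ⟪x, ∑ k ∈ S, ⟪e k, x⟫_𝕜 • e k⟫_𝕜 = ((∑ k ∈ S, ‖⟪e k, x⟫_𝕜‖ ^ 2 : ℝ) : 𝕜) := by
    rw [inner_sum, RCLike.ofReal_sum]
    refine Finset.sum_congr rfl fun k _ => ?_
    rw [inner_smul_right, ← inner_conj_symm x, RCLike.mul_conj, RCLike.ofReal_pow]
  have hproj : ‖∑ k ∈ S, ⟪e k, x⟫_𝕜 • e k‖ ^ 2 = ∑ k ∈ S, ‖⟪e k, x⟫_𝕜‖ ^ 2 := by
    rw [← RCLike.ofReal_inj (K := 𝕜), RCLike.ofReal_pow, ← inner_self_eq_norm_sq_to_K,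
      he.inner_sum, RCLike.ofReal_sum]
    exact Finset.sum_congr rfl fun k _ => by rw [RCLike.conj_mul, RCLike.ofReal_pow]
  rw [norm_sub_sq (𝕜 := 𝕜), hcross, hproj, RCLike.ofReal_re]
  ring

theorem enorm_sub_sum_inner_smul_sq (he : Orthonormal 𝕜 e) {x : H}
    (hx : ∑' k, ‖⟪e k, x⟫_𝕜‖ₑ ^ 2 = ‖x‖ₑ ^ 2) (S : Finset ι) :
    ‖x - ∑ k ∈ S, ⟪e k, x⟫_𝕜 • e k‖ₑ ^ 2 = ∑' k : ↥(S : Set ι)ᶜ, ‖⟪e k, x⟫_𝕜‖ₑ ^ 2 := by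
  have hfinite : ∑ k ∈ S, ‖⟪e k, x⟫_𝕜‖ₑ ^ 2 ≠ ∞ := by simp [ENNReal.sum_eq_top]
  rw [← ENNReal.add_right_inj hfinite, ENNReal.sum_add_tsum_compl S fun k => ‖⟪e k, x⟫_𝕜‖ₑ ^ 2, hx]
  simp only [← ofReal_norm, ← ENNReal.ofReal_pow (norm_nonneg _)]
  rw [← ENNReal.ofReal_sum_of_nonneg fun _ _ => sq_nonneg _, norm_sub_sum_inner_smul_sq he,
    ← ENNReal.ofReal_add (Finset.sum_nonneg fun _ _ => sq_nonneg _)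
      (sub_nonneg.2 (he.sum_inner_products_le x)), add_sub_cancel]

theorem sum_norm_sum_inner_mul_sq_le [Fintype κ] (he : Orthonormal 𝕜 e) {φ : κ → H}
    (hφ : Orthonormal 𝕜 φ) (S : Finset ι) (w : ι → 𝕜) :
    ∑ j, ‖∑ k ∈ S, ⟪e k, φ j⟫_𝕜 * w k‖ ^ 2 ≤ ∑ k ∈ S, ‖w k‖ ^ 2 := by
  -- For `w k = e k x` this vector is the kernel at `x` of the projection onto the span of `S`, and
  -- the claim is Bessel's inequality for `φ` tested on it.
  set kernel : H := ∑ k ∈ S, conj (w k) • e k with hkernel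
  have hnorm : ‖kernel‖ ^ 2 = ∑ k ∈ S, ‖w k‖ ^ 2 := by
    rw [← RCLike.ofReal_inj (K := 𝕜), RCLike.ofReal_pow, ← inner_self_eq_norm_sq_to_K,
      he.inner_sum, RCLike.ofReal_sum]
    exact Finset.sum_congr rfl fun k _ => by
      rw [RCLike.conj_conj, RCLike.mul_conj, RCLike.ofReal_pow]
  calc ∑ j, ‖∑ k ∈ S, ⟪e k, φ j⟫_𝕜 * w k‖ ^ 2 = ∑ j, ‖⟪φ j, kernel⟫_𝕜‖ ^ 2 := by
        refine Finset.sum_congr rfl fun j _ => ?_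
        rw [norm_inner_symm, hkernel, sum_inner]
        simp only [inner_smul_left, RCLike.conj_conj, mul_comm]
    _ ≤ ‖kernel‖ ^ 2 := hφ.sum_inner_products_le kernel
    _ = ∑ k ∈ S, ‖w k‖ ^ 2 := hnorm

end Hilbert

section L2

variable {𝕜 F X κ : Type*} [RCLike 𝕜] [NormedAddCommGroup F] [MeasurableSpace X] {μ : Measure X}

theorem lintegral_enorm_sq_eq_enorm_sq (f : Lp F 2 μ) : ∫⁻ x, ‖f x‖ₑ ^ 2 ∂μ = ‖f‖ₑ ^ 2 := by
  have hnorm := eLpNorm_nnreal_pow_eq_lintegral (μ := μ) (f := f) (p := 2) two_ne_zero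
  rw [Lp.enorm_def]
  simpa using hnorm.symm

theorem enorm_toLp_sq {f : X → F} (hf : MemLp f 2 μ) :
    ‖hf.toLp f‖ₑ ^ 2 = ∫⁻ x, ‖f x‖ₑ ^ 2 ∂μ := by
  rw [← lintegral_enorm_sq_eq_enorm_sq]
  refine lintegral_congr_ae ?_
  filter_upwards [hf.coeFn_toLp] with x hx
  rw [hx]

theorem inner_toLp_toLp {f g : X → 𝕜} (hf : MemLp f 2 μ) (hg : MemLp g 2 μ) :
    ⟪hf.toLp f, hg.toLp g⟫_𝕜 = ∫ x, conj (f x) * g x ∂μ := by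
  rw [L2.inner_def]
  refine integral_congr_ae ?_
  filter_upwards [hf.coeFn_toLp, hg.coeFn_toLp] with x hfx hgx
  rw [hfx, hgx, RCLike.inner_apply']

theorem orthonormal_toLp_ofReal [DecidableEq κ] {φ : κ → X → ℝ}
    (hφ : ∀ j, MemLp (fun x => (φ j x : 𝕜)) 2 μ)
    (hortho : ∀ i j, ∫ x, φ i x * φ j x ∂μ = if i = j then 1 else 0) :
    Orthonormal 𝕜 fun j => (hφ j).toLp fun x => (φ j x : 𝕜) := by
  rw [orthonormal_iff_ite]
  intro i j
  simp only [inner_toLp_toLp, RCLike.conj_ofReal, ← RCLike.ofReal_mul, integral_ofReal, hortho]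
  split_ifs <;> simp

theorem lintegral_density_toLp_ofReal_sq [Fintype κ] {φ : κ → X → ℝ}
    (hφ : ∀ j, MemLp (fun x => (φ j x : 𝕜)) 2 μ) :
    ∫⁻ x, ENNReal.ofReal ((∑ j, ‖(hφ j).toLp (fun x => (φ j x : 𝕜)) x‖ ^ 2) ^ 2) ∂μ =
      ∫⁻ x, ENNReal.ofReal ((∑ j, φ j x ^ 2) ^ 2) ∂μ := by
  refine lintegral_congr_ae ?_
  filter_upwards [ae_all_iff.2 fun j => (hφ j).coeFn_toLp] with x hx
  simp [hx]

end L2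

section Density

theorem sq_max_sqrt_sub_sqrt_le_sum_norm_sub_sq {κ F : Type*} [Fintype κ]
    [NormedAddCommGroup F] (a b : κ → F) {t : ℝ} (hb : ∑ j, ‖b j‖ ^ 2 ≤ t) :
    max 0 (√(∑ j, ‖a j‖ ^ 2) - √t) ^ 2 ≤ ∑ j, ‖a j - b j‖ ^ 2 := by
  have htriangle : √(∑ j, ‖a j‖ ^ 2) ≤ √(∑ j, ‖a j - b j‖ ^ 2) + √(∑ j, ‖b j‖ ^ 2) := by
    simpa [PiLp.norm_eq_of_L2] using
      norm_add_le (WithLp.toLp 2 (a - b) : PiLp 2 fun _ : κ => F) (WithLp.toLp 2 b)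
  have hgap : max 0 (√(∑ j, ‖a j‖ ^ 2) - √t) ≤ √(∑ j, ‖a j - b j‖ ^ 2) :=
    max_le (sqrt_nonneg _) (by linarith [sqrt_le_sqrt hb])
  calc max 0 (√(∑ j, ‖a j‖ ^ 2) - √t) ^ 2 ≤ √(∑ j, ‖a j - b j‖ ^ 2) ^ 2 := by gcongr
    _ = ∑ j, ‖a j - b j‖ ^ 2 := sq_sqrt (by positivity)

theorem integral_sqrt_sub_sqrt_mul_sq {r c : ℝ} (hr : 0 ≤ r) (hc : 0 < c) :
    ∫ E in (0 : ℝ)..r / c, (√r - √(c * E)) ^ 2 = r ^ 2 / (6 * c) := by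
  have hrc : 0 ≤ r / c := by positivity
  have hexpand : ∀ E ∈ Set.uIcc 0 (r / c),
      (√r - √(c * E)) ^ 2 = r + c * E - 2 * √r * √c * E ^ (1 / 2 : ℝ) := by
    intro E hE
    rw [Set.uIcc_of_le hrc] at hE
    rw [← sqrt_eq_rpow, sub_sq, sq_sqrt hr, sq_sqrt (mul_nonneg hc.le hE.1), sqrt_mul hc.le]
    ring
  have hpow : (r / c) ^ ((1 : ℝ) / 2 + 1) = r / c * (√r / √c) := by
    rw [rpow_add_one' hrc (by norm_num), ← sqrt_eq_rpow, sqrt_div hr, mul_comm]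
  have hcross : 2 * √r * √c * (r / c * (√r / √c) / ((1 : ℝ) / 2 + 1)) = 4 / 3 * r * (r / c) := by
    have : √c ≠ 0 := (sqrt_pos.2 hc).ne'
    field_simp
    rw [sq_sqrt hr]
    ring
  rw [intervalIntegral.integral_congr hexpand, intervalIntegral.integral_sub
      (by apply Continuous.intervalIntegrable; fun_prop)
      ((intervalIntegral.intervalIntegrable_rpow (.inl (by norm_num))).const_mul _),
    intervalIntegral.integral_add (by simp) (by apply Continuous.intervalIntegrable; fun_prop),
    intervalIntegral.integral_const, intervalIntegral.integral_const_mul,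
    intervalIntegral.integral_const_mul, integral_rpow (.inl (by norm_num)), integral_id, hpow,
    zero_rpow (by norm_num), sub_zero (r / c * _), hcross, smul_eq_mul]
  field_simp
  ring

theorem ofReal_sq_le_mul_lintegral_sq_max_sqrt_sub_sqrt {r c : ℝ} (hr : 0 ≤ r) (hc : 0 < c) :
    ENNReal.ofReal (r ^ 2) ≤ ENNReal.ofReal (6 * c) *
      ∫⁻ E in Set.Ioi (0 : ℝ), ENNReal.ofReal (max 0 (√r - √(c * E)) ^ 2) := by
  have hint : IntegrableOn (fun E => (√r - √(c * E)) ^ 2) (Set.Ioc 0 (r / c)) :=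
    (by fun_prop : Continuous fun E => (√r - √(c * E)) ^ 2).integrableOn_Ioc
  rw [← mul_div_cancel₀ (r ^ 2) (by positivity : 6 * c ≠ 0), ENNReal.ofReal_mul (by positivity),
    ← integral_sqrt_sub_sqrt_mul_sq hr hc, intervalIntegral.integral_of_le (by positivity),
    ofReal_integral_eq_lintegral_ofReal hint (.of_forall fun _ => sq_nonneg _)]
  gcongr ENNReal.ofReal (6 * c) * ?_
  calc ∫⁻ E in Set.Ioc 0 (r / c), ENNReal.ofReal ((√r - √(c * E)) ^ 2)
      ≤ ∫⁻ E in Set.Ioc 0 (r / c), ENNReal.ofReal (max 0 (√r - √(c * E)) ^ 2) := by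
        refine setLIntegral_mono' measurableSet_Ioc fun E hE => ?_
        have hle : √(c * E) ≤ √r := sqrt_le_sqrt ((le_div_iff₀' hc).1 hE.2)
        rw [max_eq_right (sub_nonneg.2 hle)]
    _ ≤ _ := lintegral_mono_set Set.Ioc_subset_Ioi_self

variable {𝕜 X ι κ : Type*} [RCLike 𝕜] [MeasurableSpace X] {μ : Measure X} [Fintype κ]

theorem lintegral_sq_max_sqrt_density_sub_sqrt_le {e : ι → Lp 𝕜 2 μ} (he : Orthonormal 𝕜 e)
    {φ : κ → Lp 𝕜 2 μ} (hφ : Orthonormal 𝕜 φ)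
    (hparseval : ∀ j, ∑' k, ‖⟪e k, φ j⟫_𝕜‖ₑ ^ 2 = ‖φ j‖ₑ ^ 2) (S : Finset ι) {t : ℝ}
    (hS : ∀ᵐ x ∂μ, ∑ k ∈ S, ‖e k x‖ ^ 2 ≤ t) :
    ∫⁻ x, ENNReal.ofReal (max 0 (√(∑ j, ‖φ j x‖ ^ 2) - √t) ^ 2) ∂μ ≤
      ∑ j, ∑' k : ↥(S : Set ι)ᶜ, ‖⟪e k, φ j⟫_𝕜‖ₑ ^ 2 := by
  set low : κ → Lp 𝕜 2 μ := fun j => ∑ k ∈ S, ⟪e k, φ j⟫_𝕜 • e k with hlow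
  have hlow_apply : ∀ᵐ x ∂μ, ∀ j, low j x = ∑ k ∈ S, ⟪e k, φ j⟫_𝕜 * e k x := by
    have hsmul : ∀ᵐ x ∂μ, ∀ j, ∀ k ∈ S, (⟪e k, φ j⟫_𝕜 • e k) x = ⟪e k, φ j⟫_𝕜 * e k x :=
      ae_all_iff.2 fun j => (ae_ball_iff S.countable_toSet).2 fun k _ =>
        Lp.coeFn_smul ⟪e k, φ j⟫_𝕜 (e k)
    have hsum : ∀ᵐ x ∂μ, ∀ j, low j x = ∑ k ∈ S, (⟪e k, φ j⟫_𝕜 • e k) x :=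
      ae_all_iff.2 fun j => by
        filter_upwards [Lp.coeFn_finsetSum S fun k => ⟪e k, φ j⟫_𝕜 • e k] with x hx
        rw [hlow, hx, Finset.sum_apply]
    filter_upwards [hsmul, hsum] with x hx₁ hx₂ j
    rw [hx₂, Finset.sum_congr rfl (hx₁ j)]
  have hsub : ∀ᵐ x ∂μ, ∀ j, (φ j - low j) x = φ j x - low j x :=
    ae_all_iff.2 fun j => Lp.coeFn_sub (φ j) (low j)
  calc ∫⁻ x, ENNReal.ofReal (max 0 (√(∑ j, ‖φ j x‖ ^ 2) - √t) ^ 2) ∂μ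
      ≤ ∫⁻ x, ∑ j, ‖(φ j - low j) x‖ₑ ^ 2 ∂μ := by
        refine lintegral_mono_ae ?_
        filter_upwards [hS, hlow_apply, hsub] with x hxS hxlow hxsub
        have hbessel : ∑ j, ‖low j x‖ ^ 2 ≤ t := by
          simp only [hxlow]
          exact (sum_norm_sum_inner_mul_sq_le he hφ S fun k => e k x).trans hxS
        simp only [hxsub, ← ofReal_norm, ← ENNReal.ofReal_pow (norm_nonneg _)]
        rw [← ENNReal.ofReal_sum_of_nonneg fun _ _ => sq_nonneg _]
        exact ENNReal.ofReal_le_ofReal (sq_max_sqrt_sub_sqrt_le_sum_norm_sub_sq _ _ hbessel)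
    _ = ∑ j, ‖φ j - low j‖ₑ ^ 2 := by
        rw [lintegral_finsetSum _ fun j _ => (Lp.stronglyMeasurable _).measurable.enorm.pow_const 2]
        simp only [lintegral_enorm_sq_eq_enorm_sq]
    _ = ∑ j, ∑' k : ↥(S : Set ι)ᶜ, ‖⟪e k, φ j⟫_𝕜‖ₑ ^ 2 :=
        Finset.sum_congr rfl fun j _ => enorm_sub_sum_inner_smul_sq he (hparseval j) S

theorem lintegral_tsum_indicator_Iic [Countable ι] (ev : ι → ℝ) (a : ι → ℝ≥0∞) :
    ∫⁻ E in Set.Ioi (0 : ℝ), ∑' k, (Set.Iic (ev k)).indicator (fun _ => a k) E =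
      ∑' k, ENNReal.ofReal (ev k) * a k := by
  rw [lintegral_tsum fun k => (measurable_const.indicator measurableSet_Iic).aemeasurable]
  refine tsum_congr fun k => ?_
  rw [lintegral_indicator_const measurableSet_Iic, Measure.restrict_apply measurableSet_Iic,
    Set.Iic_inter_Ioi, Real.volume_Ioc, sub_zero, mul_comm]

theorem lintegral_density_sq_le_of_spectral_bound [SFinite μ] [Countable ι] {e : ι → Lp 𝕜 2 μ}
    (he : Orthonormal 𝕜 e) {φ : κ → Lp 𝕜 2 μ} (hφ : Orthonormal 𝕜 φ)
    (hparseval : ∀ j, ∑' k, ‖⟪e k, φ j⟫_𝕜‖ₑ ^ 2 = ‖φ j‖ₑ ^ 2) {ev : ι → ℝ}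
    (hfin : ∀ E, {k | ev k < E}.Finite) {c : ℝ} (hc : 0 < c)
    (hspectral : ∀ E > 0, ∀ᵐ x ∂μ, ∑ k ∈ (hfin E).toFinset, ‖e k x‖ ^ 2 ≤ c * E) :
    ∫⁻ x, ENNReal.ofReal ((∑ j, ‖φ j x‖ ^ 2) ^ 2) ∂μ ≤
      ENNReal.ofReal (6 * c) * ∑ j, ∑' k, ENNReal.ofReal (ev k) * ‖⟪e k, φ j⟫_𝕜‖ₑ ^ 2 := by
  have hmeas : ∀ j, Measurable (φ j) := fun j => (Lp.stronglyMeasurable (φ j)).measurable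
  calc ∫⁻ x, ENNReal.ofReal ((∑ j, ‖φ j x‖ ^ 2) ^ 2) ∂μ
      ≤ ∫⁻ x, ENNReal.ofReal (6 * c) * (∫⁻ E in Set.Ioi (0 : ℝ),
          ENNReal.ofReal (max 0 (√(∑ j, ‖φ j x‖ ^ 2) - √(c * E)) ^ 2)) ∂μ :=
        lintegral_mono fun x =>
          ofReal_sq_le_mul_lintegral_sq_max_sqrt_sub_sqrt (by positivity) hc
    _ = ENNReal.ofReal (6 * c) * ∫⁻ E in Set.Ioi (0 : ℝ), ∫⁻ x,
          ENNReal.ofReal (max 0 (√(∑ j, ‖φ j x‖ ^ 2) - √(c * E)) ^ 2) ∂μ := by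
        rw [lintegral_const_mul' _ _ ENNReal.ofReal_ne_top, lintegral_lintegral_swap (by fun_prop)]
    _ ≤ ENNReal.ofReal (6 * c) * ∫⁻ E in Set.Ioi (0 : ℝ), ∑ j, ∑' k,
          (Set.Iic (ev k)).indicator (fun _ => ‖⟪e k, φ j⟫_𝕜‖ₑ ^ 2) E := by
        gcongr ENNReal.ofReal (6 * c) * ?_
        refine setLIntegral_mono' measurableSet_Ioi fun E hE =>
          (lintegral_sq_max_sqrt_density_sub_sqrt_le he hφ hparseval _ (hspectral E hE)).trans_eq
            (Finset.sum_congr rfl fun j _ => ?_)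
        rw [tsum_subtype ((hfin E).toFinset : Set ι)ᶜ fun k => ‖⟪e k, φ j⟫_𝕜‖ₑ ^ 2]
        simp [Set.indicator]
    _ = ENNReal.ofReal (6 * c) * ∑ j, ∑' k, ENNReal.ofReal (ev k) * ‖⟪e k, φ j⟫_𝕜‖ₑ ^ 2 := by
        rw [lintegral_finsetSum _ fun j _ => Measurable.tsum fun k =>
          measurable_const.indicator measurableSet_Iic]
        simp only [lintegral_tsum_indicator_Iic]

end Density

section FourierMode

/-- The `m`-th Fourier mode of period `T`, normalised to have norm one in `L²(0, T)`. -/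
noncomputable def fourierMode (T : ℝ) (m : ℤ) (x : ℝ) : ℂ :=
  fourier m (x : AddCircle T) / √T

variable {T : ℝ} (m : ℤ)

@[fun_prop]
theorem continuous_fourierMode : Continuous (fourierMode T m) :=
  ((fourier m).continuous.comp (AddCircle.continuous_mk' T)).div_const _

theorem norm_fourierMode_sq (hT : 0 ≤ T) (x : ℝ) : ‖fourierMode T m x‖ ^ 2 = T⁻¹ := by
  rw [fourierMode, norm_div, fourier_apply, Circle.norm_coe, Complex.norm_real, div_pow,
    norm_eq_abs, sq_abs, sq_sqrt hT, one_pow, one_div]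

theorem conj_fourierMode (x : ℝ) : conj (fourierMode T m x) = fourierMode T (-m) x := by
  simp only [fourierMode, map_div₀, Complex.conj_ofReal, fourier_neg]

theorem fourierMode_period : fourierMode T m T = fourierMode T m 0 := by
  simp only [fourierMode, AddCircle.coe_period, AddCircle.coe_zero]

theorem hasDerivAt_fourierMode (x : ℝ) :
    HasDerivAt (fourierMode T m) (2 * π * Complex.I * m / T * fourierMode T m x) x := by
  have hderiv := (hasDerivAt_fourier T m x).div_const (√T : ℂ)
  rw [mul_div_assoc] at hderiv
  exact hderiv

theorem integral_conj_fourierMode_mul_deriv {f f' : ℝ → ℂ} (hf : ∀ x, HasDerivAt f (f' x) x)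
    (hf' : IntervalIntegrable f' volume 0 T) (hper : f T = f 0) :
    ∫ x in 0..T, conj (fourierMode T m x) * f' x =
      2 * π * Complex.I * m / T * ∫ x in 0..T, conj (fourierMode T m x) * f x := by
  simp only [conj_fourierMode]
  rw [intervalIntegral.integral_mul_deriv_eq_deriv_mul
      (fun x _ => hasDerivAt_fourierMode (-m) x) (fun x _ => hf x)
      (by apply Continuous.intervalIntegrable; fun_prop) hf',
    hper, fourierMode_period, sub_self, zero_sub, ← intervalIntegral.integral_neg,
    ← intervalIntegral.integral_const_mul]
  congr 1 with x
  push_cast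
  ring

theorem integral_conj_fourierMode_mul (hT : 0 < T) (f : ℝ → ℂ) :
    ∫ x in 0..T, conj (fourierMode T m x) * f x = √T * fourierCoeffOn hT f m := by
  have hsqrt : (√T : ℂ) * √T = T := by exact_mod_cast mul_self_sqrt hT.le
  have hne : (√T : ℂ) ≠ 0 := by exact_mod_cast (sqrt_pos.2 hT).ne'
  rw [fourierCoeffOn_eq_integral, Complex.real_smul, ← mul_assoc,
    ← intervalIntegral.integral_const_mul]
  congr 1 with x
  rw [conj_fourierMode, fourierMode, smul_eq_mul, sub_zero]
  push_cast
  rw [← hsqrt]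
  field_simp

theorem tsum_enorm_integral_conj_fourierMode_mul_sq (hT : 0 < T) {f : ℝ → ℂ}
    (hf : MemLp f 2 (volume.restrict (Set.Ioc 0 T))) :
    ∑' m : ℤ, ‖∫ x in 0..T, conj (fourierMode T m x) * f x‖ₑ ^ 2 =
      ∫⁻ x in Set.Ioc 0 T, ‖f x‖ₑ ^ 2 := by
  have hparseval : HasSum (fun m => T * ‖fourierCoeffOn hT f m‖ ^ 2)
      (∫ x in Set.Ioc 0 T, ‖f x‖ ^ 2) := by
    convert! (hasSum_sq_fourierCoeffOn hT hf).mul_left T using 1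
    rw [sub_zero, smul_eq_mul, mul_inv_cancel_left₀ hT.ne', intervalIntegral.integral_of_le hT.le]
  simp only [← ofReal_norm, ← ENNReal.ofReal_pow (norm_nonneg _)]
  rw [← ofReal_integral_eq_lintegral_ofReal (hf.integrable_norm_pow two_ne_zero)
      (.of_forall fun _ => sq_nonneg _), ← hparseval.tsum_eq,
    ENNReal.ofReal_tsum_of_nonneg (fun _ => by positivity) hparseval.summable]
  refine tsum_congr fun m => ?_
  rw [integral_conj_fourierMode_mul m hT, norm_mul, Complex.norm_real, mul_pow, norm_eq_abs,
    sq_abs, sq_sqrt hT.le]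

end FourierMode

section Torus

/-- A fundamental domain of the torus `ℝ / Aℤ × ℝ / Bℤ`. -/
abbrev torusCell (A B : ℝ) : Set (ℝ × ℝ) :=
  Set.Ioc 0 A ×ˢ Set.Ioc 0 B

/-- The Fourier mode of the torus `ℝ / Aℤ × ℝ / Bℤ` with frequency `(2πk₁/A, 2πk₂/B)`, normalised
to have norm one in `L²` of a fundamental domain. -/
noncomputable def torusMode (A B : ℝ) (k : ℤ × ℤ) (z : ℝ × ℝ) : ℂ :=
  fourierMode A k.1 z.1 * fourierMode B k.2 z.2

/-- The Laplace eigenvalue of the mode `torusMode A B k`. -/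
noncomputable def torusEigenvalue (A B : ℝ) (k : ℤ × ℤ) : ℝ :=
  (2 * π * k.1 / A) ^ 2 + (2 * π * k.2 / B) ^ 2

/-- The coefficient of `f` along the normalised mode `torusMode A B k`. -/
noncomputable def torusCoeff (A B : ℝ) (f : ℝ × ℝ → ℂ) (k : ℤ × ℤ) : ℂ :=
  ∫ z in torusCell A B, conj (torusMode A B k z) * f z

theorem volume_restrict_torusCell (A B : ℝ) :
    volume.restrict (torusCell A B) =
      (volume.restrict (Set.Ioc 0 A)).prod (volume.restrict (Set.Ioc 0 B)) :=
  (Measure.prod_restrict _ _).symm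

variable {F : Type*} [NormedAddCommGroup F]

theorem integrableOn_torusCell {f : ℝ × ℝ → F}
    (hf : Continuous f) (A B : ℝ) : IntegrableOn f (torusCell A B) :=
  (hf.continuousOn.integrableOn_compact (isCompact_Icc.prod isCompact_Icc)).mono_set
    (Set.prod_mono Set.Ioc_subset_Icc_self Set.Ioc_subset_Icc_self)

theorem memLp_two_torusCell {f : ℝ × ℝ → F} (hf : Continuous f) (A B : ℝ) :
    MemLp f 2 (volume.restrict (torusCell A B)) :=
  (memLp_two_iff_integrable_sq_norm hf.aestronglyMeasurable).2
    (integrableOn_torusCell (by fun_prop) A B)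

theorem memLp_two_Ioc {f : ℝ → F} (hf : Continuous f) (a b : ℝ) :
    MemLp f 2 (volume.restrict (Set.Ioc a b)) :=
  (memLp_two_iff_integrable_sq_norm hf.aestronglyMeasurable).2
    (by fun_prop : Continuous fun x => ‖f x‖ ^ 2).integrableOn_Ioc

variable {A B : ℝ} (k : ℤ × ℤ)

@[fun_prop]
theorem continuous_torusMode : Continuous (torusMode A B k) := by
  unfold torusMode
  fun_prop

theorem norm_torusMode_sq (hA : 0 ≤ A) (hB : 0 ≤ B) (z : ℝ × ℝ) :
    ‖torusMode A B k z‖ ^ 2 = (A * B)⁻¹ := by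
  rw [torusMode, norm_mul, mul_pow, norm_fourierMode_sq _ hA, norm_fourierMode_sq _ hB, mul_inv]

theorem torusCoeff_eq_integral_integral (hA : 0 ≤ A) (hB : 0 ≤ B) {f : ℝ × ℝ → ℂ}
    (hf : Continuous f) :
    torusCoeff A B f k = ∫ x in 0..A, conj (fourierMode A k.1 x) *
      ∫ y in 0..B, conj (fourierMode B k.2 y) * f (x, y) := by
  have hint := integrableOn_torusCell (f := fun z => conj (torusMode A B k z) * f z)
    (by fun_prop) A B
  rw [IntegrableOn, volume_restrict_torusCell] at hint
  rw [torusCoeff, volume_restrict_torusCell, integral_prod _ hint,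
    intervalIntegral.integral_of_le hA]
  congr 1 with x
  rw [intervalIntegral.integral_of_le hB, ← integral_const_mul]
  congr 1 with y
  rw [torusMode, map_mul, mul_assoc]

theorem torusCoeff_eq_integral_integral_symm (hA : 0 ≤ A) (hB : 0 ≤ B) {f : ℝ × ℝ → ℂ}
    (hf : Continuous f) :
    torusCoeff A B f k = ∫ y in 0..B, conj (fourierMode B k.2 y) *
      ∫ x in 0..A, conj (fourierMode A k.1 x) * f (x, y) := by
  have hint := integrableOn_torusCell (f := fun z => conj (torusMode A B k z) * f z)
    (by fun_prop) A B
  rw [IntegrableOn, volume_restrict_torusCell] at hint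
  rw [torusCoeff, volume_restrict_torusCell, integral_prod_symm _ hint,
    intervalIntegral.integral_of_le hB]
  congr 1 with y
  rw [intervalIntegral.integral_of_le hA, ← integral_const_mul]
  congr 1 with x
  rw [torusMode, map_mul, mul_left_comm, mul_assoc]

theorem tsum_enorm_torusCoeff_sq (hA : 0 < A) (hB : 0 < B) {f : ℝ × ℝ → ℂ}
    (hf : Continuous f) :
    ∑' k, ‖torusCoeff A B f k‖ₑ ^ 2 = ∫⁻ z in torusCell A B, ‖f z‖ₑ ^ 2 := by
  set partialCoeff : ℤ → ℝ → ℂ := fun n x => ∫ y in 0..B, conj (fourierMode B n y) * f (x, y)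
  have hcont : ∀ n, Continuous (partialCoeff n) := fun n =>
    intervalIntegral.continuous_parametric_intervalIntegral_of_continuous' (by fun_prop) 0 B
  calc ∑' k, ‖torusCoeff A B f k‖ₑ ^ 2
      = ∑' n : ℤ, ∑' m : ℤ, ‖∫ x in 0..A, conj (fourierMode A m x) * partialCoeff n x‖ₑ ^ 2 := by
        simp only [torusCoeff_eq_integral_integral _ hA.le hB.le hf]
        rw [ENNReal.tsum_prod', ENNReal.tsum_comm]
    _ = ∑' n : ℤ, ∫⁻ x in Set.Ioc 0 A, ‖partialCoeff n x‖ₑ ^ 2 := tsum_congr fun n =>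
        tsum_enorm_integral_conj_fourierMode_mul_sq hA (memLp_two_Ioc (hcont n) 0 A)
    _ = ∫⁻ x in Set.Ioc 0 A, ∑' n : ℤ, ‖partialCoeff n x‖ₑ ^ 2 :=
        (lintegral_tsum fun n => ((hcont n).measurable.enorm.pow_const 2).aemeasurable).symm
    _ = ∫⁻ x in Set.Ioc 0 A, ∫⁻ y in Set.Ioc 0 B, ‖f (x, y)‖ₑ ^ 2 := lintegral_congr fun x =>
        tsum_enorm_integral_conj_fourierMode_mul_sq hB (memLp_two_Ioc (by fun_prop) 0 B)
    _ = ∫⁻ z in torusCell A B, ‖f z‖ₑ ^ 2 := by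
        rw [volume_restrict_torusCell,
          lintegral_prod _ (hf.measurable.enorm.pow_const 2).aemeasurable]

theorem torusCoeff_eq_zero_of_integral_snd_eq_zero (hA : 0 ≤ A) (hB : 0 ≤ B) {f : ℝ × ℝ → ℝ}
    (hf : Continuous f) (hmean : ∀ x, ∫ y in 0..B, f (x, y) = 0) (hk : k.2 = 0) :
    torusCoeff A B (fun z => f z) k = 0 := by
  have hinner : ∀ x, ∫ y in 0..B, conj (fourierMode B k.2 y) * (f (x, y) : ℂ) = 0 := by
    intro x
    simp [hk, fourierMode, intervalIntegral.integral_const_mul, intervalIntegral.integral_ofReal,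
      hmean]
  simp [torusCoeff_eq_integral_integral k hA hB (f := fun z => (f z : ℂ)) (by fun_prop), hinner]

theorem torusCoeff_of_hasDerivAt_fst (hA : 0 ≤ A) (hB : 0 ≤ B) {f f' : ℝ × ℝ → ℂ}
    (hf : Continuous f) (hf' : Continuous f')
    (hderiv : ∀ z : ℝ × ℝ, HasDerivAt (fun s => f (s, z.2)) (f' z) z.1)
    (hper : ∀ y, f (A, y) = f (0, y)) :
    torusCoeff A B f' k = 2 * π * Complex.I * k.1 / A * torusCoeff A B f k := by
  rw [torusCoeff_eq_integral_integral_symm k hA hB hf',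
    torusCoeff_eq_integral_integral_symm k hA hB hf, ← intervalIntegral.integral_const_mul]
  congr 1 with y
  rw [integral_conj_fourierMode_mul_deriv k.1 (f := fun s => f (s, y)) (f' := fun s => f' (s, y))
    (fun x => hderiv (x, y)) (Continuous.intervalIntegrable (by fun_prop) _ _) (hper y),
    mul_left_comm]

theorem torusCoeff_of_hasDerivAt_snd (hA : 0 ≤ A) (hB : 0 ≤ B) {f f' : ℝ × ℝ → ℂ}
    (hf : Continuous f) (hf' : Continuous f')
    (hderiv : ∀ z : ℝ × ℝ, HasDerivAt (fun t => f (z.1, t)) (f' z) z.2)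
    (hper : ∀ x, f (x, B) = f (x, 0)) :
    torusCoeff A B f' k = 2 * π * Complex.I * k.2 / B * torusCoeff A B f k := by
  rw [torusCoeff_eq_integral_integral k hA hB hf', torusCoeff_eq_integral_integral k hA hB hf,
    ← intervalIntegral.integral_const_mul]
  congr 1 with x
  rw [integral_conj_fourierMode_mul_deriv k.2 (f := fun t => f (x, t)) (f' := fun t => f' (x, t))
    (fun y => hderiv (x, y)) (Continuous.intervalIntegrable (by fun_prop) _ _) (hper x),
    mul_left_comm]

end Torus

section Gradient

variable {f : ℝ × ℝ → ℝ}

theorem hasDerivAt_pd1 (hf : Differentiable ℝ f) (z : ℝ × ℝ) :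
    HasDerivAt (fun s => f (s, z.2)) (pd1 f z) z.1 :=
  (by fun_prop : DifferentiableAt ℝ (fun s => f (s, z.2)) z.1).hasDerivAt

theorem hasDerivAt_pd2 (hf : Differentiable ℝ f) (z : ℝ × ℝ) :
    HasDerivAt (fun t => f (z.1, t)) (pd2 f z) z.2 :=
  (by fun_prop : DifferentiableAt ℝ (fun t => f (z.1, t)) z.2).hasDerivAt

theorem pd1_eq_fderiv (hf : Differentiable ℝ f) (z : ℝ × ℝ) : pd1 f z = fderiv ℝ f z (1, 0) :=
  ((hf z).hasFDerivAt.comp_hasDerivAt z.1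
    ((hasDerivAt_id z.1).prodMk (hasDerivAt_const z.1 z.2))).deriv

theorem pd2_eq_fderiv (hf : Differentiable ℝ f) (z : ℝ × ℝ) : pd2 f z = fderiv ℝ f z (0, 1) :=
  ((hf z).hasFDerivAt.comp_hasDerivAt z.2
    ((hasDerivAt_const z.2 z.1).prodMk (hasDerivAt_id z.2))).deriv

theorem continuous_pd1 (hf : ContDiff ℝ 1 f) : Continuous (pd1 f) := by
  rw [funext (pd1_eq_fderiv (hf.differentiable one_ne_zero))]
  exact (hf.continuous_fderiv one_ne_zero).clm_apply continuous_const

theorem continuous_pd2 (hf : ContDiff ℝ 1 f) : Continuous (pd2 f) := by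
  rw [funext (pd2_eq_fderiv (hf.differentiable one_ne_zero))]
  exact (hf.continuous_fderiv one_ne_zero).clm_apply continuous_const

theorem ofReal_add_sq_mul_enorm_sq (a b : ℝ) (w : ℂ) :
    ENNReal.ofReal (a ^ 2 + b ^ 2) * ‖w‖ₑ ^ 2 =
      ‖Complex.I * a * w‖ₑ ^ 2 + ‖Complex.I * b * w‖ₑ ^ 2 := by
  simp only [← ofReal_norm, ← ENNReal.ofReal_pow (norm_nonneg _)]
  rw [← ENNReal.ofReal_mul (by positivity), ← ENNReal.ofReal_add (by positivity) (by positivity)]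
  simp only [norm_mul, Complex.norm_I, Complex.norm_real, norm_eq_abs, one_mul, mul_pow, sq_abs,
    add_mul]

theorem tsum_torusEigenvalue_mul_enorm_torusCoeff_sq {A B : ℝ} (hA : 0 < A) (hB : 0 < B)
    (hf : ContDiff ℝ 1 f) (hper1 : ∀ y, f (A, y) = f (0, y)) (hper2 : ∀ x, f (x, B) = f (x, 0)) :
    ∑' k, ENNReal.ofReal (torusEigenvalue A B k) * ‖torusCoeff A B (fun z => f z) k‖ₑ ^ 2 =
      ENNReal.ofReal (∫ z in torusCell A B, (pd1 f z ^ 2 + pd2 f z ^ 2)) := by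
  have hdiff := hf.differentiable one_ne_zero
  have hcont := hf.continuous
  have hcont1 := continuous_pd1 hf
  have hcont2 := continuous_pd2 hf
  have hcoeff1 : ∀ k, torusCoeff A B (fun z => (pd1 f z : ℂ)) k =
      Complex.I * (2 * π * k.1 / A : ℝ) * torusCoeff A B (fun z => f z) k := fun k => by
    rw [torusCoeff_of_hasDerivAt_fst k hA.le hB.le (f := fun z => (f z : ℂ)) (by fun_prop)
      (by fun_prop) (fun z => (hasDerivAt_pd1 hdiff z).ofReal_comp) (fun y => by rw [hper1])]
    push_cast
    ring
  have hcoeff2 : ∀ k, torusCoeff A B (fun z => (pd2 f z : ℂ)) k =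
      Complex.I * (2 * π * k.2 / B : ℝ) * torusCoeff A B (fun z => f z) k := fun k => by
    rw [torusCoeff_of_hasDerivAt_snd k hA.le hB.le (f := fun z => (f z : ℂ)) (by fun_prop)
      (by fun_prop) (fun z => (hasDerivAt_pd2 hdiff z).ofReal_comp) (fun x => by rw [hper2])]
    push_cast
    ring
  simp only [torusEigenvalue, ofReal_add_sq_mul_enorm_sq, ← hcoeff1, ← hcoeff2]
  rw [ENNReal.tsum_add, tsum_enorm_torusCoeff_sq hA hB (by fun_prop),
    tsum_enorm_torusCoeff_sq hA hB (by fun_prop),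
    ← lintegral_add_left (by fun_prop),
    ofReal_integral_eq_lintegral_ofReal (integrableOn_torusCell (by fun_prop) A B)
      (.of_forall fun _ => by positivity)]
  refine lintegral_congr fun z => ?_
  rw [ENNReal.ofReal_add (sq_nonneg _) (sq_nonneg _)]
  simp only [← ofReal_norm, ← ENNReal.ofReal_pow (norm_nonneg _)]
  simp only [Complex.norm_real, norm_eq_abs, sq_abs]

end Gradient

section TorusLiebThirring

variable {A B : ℝ}

theorem lintegral_enorm_torusMode_sq (hA : 0 < A) (hB : 0 < B) (k : ℤ × ℤ) :
    ∫⁻ z in torusCell A B, ‖torusMode A B k z‖ₑ ^ 2 = 1 := by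
  simp only [← ofReal_norm, ← ENNReal.ofReal_pow (norm_nonneg _), norm_torusMode_sq k hA.le hB.le]
  rw [setLIntegral_const, Measure.volume_eq_prod, Measure.prod_prod, Real.volume_Ioc,
    Real.volume_Ioc, sub_zero, sub_zero, ← ENNReal.ofReal_mul hA.le,
    ← ENNReal.ofReal_mul (by positivity), inv_mul_cancel₀ (by positivity), ENNReal.ofReal_one]

/-- The mode `torusMode A B k` as an element of `L²` of the fundamental domain. -/
noncomputable def torusModeLp (A B : ℝ) (k : ℤ × ℤ) :
    Lp ℂ 2 (volume.restrict (torusCell A B)) :=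
  (memLp_two_torusCell (continuous_torusMode k) A B).toLp (torusMode A B k)

theorem inner_torusModeLp_toLp (k : ℤ × ℤ) {f : ℝ × ℝ → ℂ}
    (hf : MemLp f 2 (volume.restrict (torusCell A B))) :
    ⟪torusModeLp A B k, hf.toLp f⟫_ℂ = torusCoeff A B f k :=
  inner_toLp_toLp _ hf

theorem orthonormal_torusModeLp (hA : 0 < A) (hB : 0 < B) : Orthonormal ℂ (torusModeLp A B) := by
  have henorm : ∀ k, ‖torusModeLp A B k‖ₑ ^ 2 = 1 := fun k => by
    rw [torusModeLp, enorm_toLp_sq, lintegral_enorm_torusMode_sq hA hB]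
  refine orthonormal_of_tsum_enorm_inner_sq_eq_one (fun k => ?_) fun l => ?_
  · exact (pow_eq_one_iff_of_nonneg (norm_nonneg _) two_ne_zero).1
      (by simpa using congrArg ENNReal.toReal (henorm k))
  · rw [← lintegral_enorm_torusMode_sq hA hB l,
      ← tsum_enorm_torusCoeff_sq hA hB (continuous_torusMode l)]
    exact tsum_congr fun k => congrArg (‖·‖ₑ ^ 2) (inner_torusModeLp_toLp k _)

theorem finite_of_forall_card_le {ι : Type*} {s : Set ι} {C : ℝ}
    (h : ∀ S : Finset ι, (S : Set ι) ⊆ s → (S.card : ℝ) ≤ C) : s.Finite := by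
  by_contra hs
  obtain ⟨S, hS, hcard⟩ := Set.Infinite.exists_subset_card_eq hs (⌊C⌋₊ + 1)
  have hle : ((⌊C⌋₊ + 1 : ℕ) : ℝ) ≤ C := hcard ▸ h S hS
  exact (Nat.lt_floor_add_one C).not_ge (by exact_mod_cast hle)

variable {κ : Type*} [Fintype κ] {Λ : Set (ℤ × ℤ)} {n : ℝ}

theorem sum_norm_torusModeLp_sq_ae_eq (hA : 0 ≤ A) (hB : 0 ≤ B) (S : Finset Λ) :
    ∀ᵐ z ∂volume.restrict (torusCell A B), ∑ k ∈ S, ‖torusModeLp A B k z‖ ^ 2 =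
      S.card / (A * B) := by
  have hmode : ∀ᵐ z ∂volume.restrict (torusCell A B), ∀ k,
      torusModeLp A B k z = torusMode A B k z :=
    ae_all_iff.2 fun k => MemLp.coeFn_toLp _
  filter_upwards [hmode] with z hz
  simp [hz, norm_torusMode_sq _ hA hB, div_eq_mul_inv]

theorem tsum_subtype_enorm_inner_torusModeLp_sq (hA : 0 < A) (hB : 0 < B) {f : ℝ × ℝ → ℂ}
    (hf : Continuous f) (hΛ : ∀ k ∉ Λ, torusCoeff A B f k = 0) :
    ∑' k : Λ, ‖⟪torusModeLp A B k, (memLp_two_torusCell hf A B).toLp f⟫_ℂ‖ₑ ^ 2 =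
      ‖(memLp_two_torusCell hf A B).toLp f‖ₑ ^ 2 := by
  simp only [inner_torusModeLp_toLp]
  rw [tsum_subtype_eq_of_support_subset (f := fun k => ‖torusCoeff A B f k‖ₑ ^ 2)
      fun k hk => by_contra fun hkΛ => hk (by simp [hΛ k hkΛ]),
    tsum_enorm_torusCoeff_sq hA hB hf, enorm_toLp_sq]

theorem lintegral_torus_density_sq_le_of_card_le (hA : 0 < A) (hB : 0 < B)
    {φ : κ → Lp ℂ 2 (volume.restrict (torusCell A B))} (hφ : Orthonormal ℂ φ)
    (hparseval : ∀ j, ∑' k : Λ, ‖⟪torusModeLp A B k, φ j⟫_ℂ‖ₑ ^ 2 = ‖φ j‖ₑ ^ 2) (hn : 0 < n)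
    (hcount : ∀ E > 0, ∀ S : Finset Λ, (∀ k ∈ S, torusEigenvalue A B k < E) → S.card ≤ n * E) :
    ∫⁻ z in torusCell A B, ENNReal.ofReal ((∑ j, ‖φ j z‖ ^ 2) ^ 2) ≤
      ENNReal.ofReal (6 * (n / (A * B))) * ∑ j, ∑' k : Λ,
        ENNReal.ofReal (torusEigenvalue A B k) * ‖⟪torusModeLp A B k, φ j⟫_ℂ‖ₑ ^ 2 := by
  have hfin : ∀ E, {k : Λ | torusEigenvalue A B k < E}.Finite := fun E =>
    finite_of_forall_card_le fun S hS => hcount (max E 1) (by positivity) S fun k hk =>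
      lt_max_of_lt_left (hS hk)
  refine lintegral_density_sq_le_of_spectral_bound
    ((orthonormal_torusModeLp hA hB).comp _ Subtype.val_injective) hφ hparseval hfin
    (by positivity) fun E hE => ?_
  filter_upwards [sum_norm_torusModeLp_sq_ae_eq hA.le hB.le (hfin E).toFinset] with z hz
  calc _ = (hfin E).toFinset.card / (A * B) := hz
    _ ≤ n * E / (A * B) := by
        gcongr
        exact hcount E hE _ fun k hk => (hfin E).mem_toFinset.1 hk
    _ = n / (A * B) * E := by ring

theorem integral_torus_density_sq_le_of_card_le [DecidableEq κ] (hA : 0 < A) (hB : 0 < B)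
    {φ : κ → ℝ × ℝ → ℝ} (hC1 : ∀ j, ContDiff ℝ 1 (φ j)) (hper1 : ∀ j y, φ j (A, y) = φ j (0, y))
    (hper2 : ∀ j x, φ j (x, B) = φ j (x, 0))
    (hortho : ∀ i j, ∫ z in torusCell A B, φ i z * φ j z = if i = j then 1 else 0)
    (hΛ : ∀ j, ∀ k ∉ Λ, torusCoeff A B (fun z => φ j z) k = 0) (hn : 0 < n)
    (hcount : ∀ E > 0, ∀ S : Finset Λ, (∀ k ∈ S, torusEigenvalue A B k < E) → S.card ≤ n * E) :
    ∫ z in torusCell A B, (∑ j, φ j z ^ 2) ^ 2 ≤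
      6 * (n / (A * B)) * ∑ j, ∫ z in torusCell A B, (pd1 (φ j) z ^ 2 + pd2 (φ j) z ^ 2) := by
  have hcont : ∀ j, Continuous (φ j) := fun j => (hC1 j).continuous
  have hmem : ∀ j, MemLp (fun z => (φ j z : ℂ)) 2 (volume.restrict (torusCell A B)) := fun j =>
    memLp_two_torusCell (by fun_prop) A B
  have hgrad : ∀ j, 0 ≤ ∫ z in torusCell A B, (pd1 (φ j) z ^ 2 + pd2 (φ j) z ^ 2) := fun j =>
    integral_nonneg fun z => by positivity
  have hparseval := fun j => tsum_subtype_enorm_inner_torusModeLp_sq hA hB (by fun_prop) (hΛ j)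
  rw [← ENNReal.ofReal_le_ofReal_iff
    (mul_nonneg (by positivity) (Finset.sum_nonneg fun j _ => hgrad j))]
  calc ENNReal.ofReal (∫ z in torusCell A B, (∑ j, φ j z ^ 2) ^ 2)
      = ∫⁻ z in torusCell A B,
          ENNReal.ofReal ((∑ j, ‖(hmem j).toLp (fun z => (φ j z : ℂ)) z‖ ^ 2) ^ 2) := by
        rw [ofReal_integral_eq_lintegral_ofReal (integrableOn_torusCell (by fun_prop) A B)
          (.of_forall fun _ => sq_nonneg _)]
        exact (lintegral_density_toLp_ofReal_sq hmem).symm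
    _ ≤ ENNReal.ofReal (6 * (n / (A * B))) * ∑ j, ∑' k : Λ, ENNReal.ofReal (torusEigenvalue A B k) *
          ‖⟪torusModeLp A B k, (hmem j).toLp _⟫_ℂ‖ₑ ^ 2 :=
        lintegral_torus_density_sq_le_of_card_le hA hB (orthonormal_toLp_ofReal hmem hortho)
          hparseval hn hcount
    _ ≤ ENNReal.ofReal (6 * (n / (A * B))) * ∑ j, ∑' k, ENNReal.ofReal (torusEigenvalue A B k) *
          ‖torusCoeff A B (φ j ·) k‖ₑ ^ 2 := by
        simp only [inner_torusModeLp_toLp]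
        gcongr with j
        exact ENNReal.tsum_comp_le_tsum_of_injective Subtype.val_injective _
    _ = ENNReal.ofReal (6 * (n / (A * B)) *
          ∑ j, ∫ z in torusCell A B, (pd1 (φ j) z ^ 2 + pd2 (φ j) z ^ 2)) := by
        rw [ENNReal.ofReal_mul (p := 6 * (n / (A * B))) (by positivity),
          ENNReal.ofReal_sum_of_nonneg fun j _ => hgrad j]
        exact congrArg _ (Finset.sum_congr rfl fun j _ =>
          tsum_torusEigenvalue_mul_enorm_torusCoeff_sq hA hB (hC1 j) (hper1 j) (hper2 j))

end TorusLiebThirring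

section LatticeCount

theorem two_mul_sqrt_le_div_add {y t : ℝ} (hy : 0 ≤ y) (ht : 0 < t) : 2 * √y ≤ y / t + t := by
  have hsquare : y / t + t - 2 * √y = (√y - t) ^ 2 / t := by
    field_simp
    rw [sub_sq, sq_sqrt hy]
    ring
  linarith [div_nonneg (sq_nonneg (√y - t)) ht.le]

theorem sum_two_mul_sqrt_sub_sq_add_one_le {E t : ℝ} (ht : 0 < t) {K : ℕ} (hK : (K : ℝ) ^ 2 ≤ E) :
    ∑ n ∈ Finset.Icc 1 K, (2 * √(E - (n : ℝ) ^ 2) + 1) ≤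
      K * (E / t + t + 1) - K * (K + 1) * (2 * K + 1) / 6 / t := by
  induction K with
  | zero => simp
  | succ K ih =>
    have hprev : (K : ℝ) ^ 2 ≤ E := hK.trans' (by gcongr; simp)
    rw [Finset.sum_Icc_succ_top (by lia)]
    calc _ ≤ K * (E / t + t + 1) - K * (K + 1) * (2 * K + 1) / 6 / t +
          ((E - ((K + 1 : ℕ) : ℝ) ^ 2) / t + t + 1) := by
          gcongr
          exacts [ih hprev, two_mul_sqrt_le_div_add (sub_nonneg.2 hK) ht]
      _ = _ := by
          push_cast
          ring

theorem sum_two_mul_sqrt_sub_sq_add_one_le_mul_of_four_le {E : ℝ} {K : ℕ} (hK : 4 ≤ K)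
    (hKE : (K : ℝ) ^ 2 ≤ E) :
    ∑ n ∈ Finset.Icc 1 K, (2 * √(E - (n : ℝ) ^ 2) + 1) ≤ 1.72 * E := by
  have hE : 0 ≤ E := hKE.trans' (sq_nonneg _)
  obtain ⟨q, hq, hqK⟩ : ∃ q : ℝ, 0 ≤ q ∧ (K : ℝ) = q + 4 :=
    ⟨K - 4, sub_nonneg.2 (by exact_mod_cast hK), by ring⟩
  obtain ⟨d, hd, hdE⟩ : ∃ d : ℝ, 0 ≤ d ∧ √E = K + d :=
    ⟨√E - K, sub_nonneg.2 (le_sqrt_of_sq_le hKE), by ring⟩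
  have hR : 0 < √E := by rw [hdE, hqK]; positivity
  -- `4 / 5` approximates `π / 4`, the mean of `√(1 - x ^ 2)` over `[0, 1]`.
  refine (sum_two_mul_sqrt_sub_sq_add_one_le (t := 4 / 5 * √E) (by positivity) hKE).trans ?_
  rw [← mul_le_mul_iff_left₀ hR]
  calc _ = K * (5 / 4 * √E ^ 2 + 4 / 5 * √E ^ 2 + √E) - 5 / 24 * (K * (K + 1) * (2 * K + 1)) := by
        rw [sq_sqrt hE]
        field_simp
        rw [sq_sqrt hE]
        ring
    _ ≤ 1.72 * √E ^ 2 * √E := by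
        rw [hdE, hqK, ← sub_nonneg]
        ring_nf
        positivity
    _ = 1.72 * E * √E := by rw [sq_sqrt hE]

theorem sum_two_mul_sqrt_sub_sq_add_one_le_mul {E : ℝ} {K : ℕ} (hKE : (K : ℝ) ^ 2 ≤ E) :
    ∑ n ∈ Finset.Icc 1 K, (2 * √(E - (n : ℝ) ^ 2) + 1) ≤ 1.72 * E := by
  obtain hK | hK := lt_or_ge K 4
  · -- The AM-GM parameters are close to `√(E - n ^ 2)` where the bound is tightest.
    interval_cases K
    · norm_num at hKE ⊢
      exact hKE
    · norm_num at hKE ⊢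
      linarith [two_mul_sqrt_le_div_add (sub_nonneg.2 hKE) (by norm_num : (0 : ℝ) < 3 / 5)]
    · norm_num [Finset.sum_Icc_succ_top] at hKE ⊢
      linarith [two_mul_sqrt_le_div_add (y := E - 1) (by linarith) (by norm_num : (0 : ℝ) < 2),
        two_mul_sqrt_le_div_add (sub_nonneg.2 hKE) one_pos]
    · norm_num [Finset.sum_Icc_succ_top] at hKE ⊢
      linarith [two_mul_sqrt_le_div_add (y := E - 1) (by linarith) (by norm_num : (0 : ℝ) < 3),
        two_mul_sqrt_le_div_add (y := E - 4) (by linarith) (by norm_num : (0 : ℝ) < 12 / 5),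
        two_mul_sqrt_le_div_add (sub_nonneg.2 hKE) (by norm_num : (0 : ℝ) < 6 / 5)]
  · exact sum_two_mul_sqrt_sub_sq_add_one_le_mul_of_four_le hK hKE

theorem card_le_two_mul_add_one_of_abs_le {r : ℝ} (hr : 0 ≤ r) {T : Finset ℤ}
    (hT : ∀ m ∈ T, |(m : ℝ)| ≤ r) : (T.card : ℝ) ≤ 2 * r + 1 := by
  have hsub : T ⊆ Finset.Icc (-⌊r⌋) ⌊r⌋ := fun m hm => by
    rw [Finset.mem_Icc, ← abs_le, Int.le_floor]
    exact_mod_cast hT m hm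
  have hcard : ((Finset.Icc (-⌊r⌋) ⌊r⌋).card : ℤ) = 2 * ⌊r⌋ + 1 := by
    have := Int.floor_nonneg.2 hr
    rw [Int.card_Icc]
    lia
  calc (T.card : ℝ) ≤ (2 * ⌊r⌋ + 1 : ℤ) := by
        rw [← hcard]
        exact_mod_cast Finset.card_le_card hsub
    _ ≤ 2 * r + 1 := by
        push_cast
        linarith [Int.floor_le r]

theorem mul_card_le_of_natAbs_eq {α E : ℝ} (hα : 0 < α) {n : ℕ} {S : Finset (ℤ × ℤ)}
    (hS : ∀ k ∈ S, k.2.natAbs = n ∧ (α * k.1) ^ 2 + (k.2 : ℝ) ^ 2 < E) :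
    α * S.card ≤ 2 * (2 * √(E - (n : ℝ) ^ 2) + α) := by
  classical
  have hsub : S ⊆ S.image Prod.fst ×ˢ {(n : ℤ), -(n : ℤ)} := fun k hk => by
    simp only [Finset.mem_product, Finset.mem_insert, Finset.mem_singleton]
    exact ⟨Finset.mem_image_of_mem _ hk, Int.natAbs_eq_iff.1 (hS k hk).1⟩
  have hfst : ∀ m ∈ S.image Prod.fst, |(m : ℝ)| ≤ √(E - (n : ℝ) ^ 2) / α := by
    intro m hm
    obtain ⟨k, hk, rfl⟩ := Finset.mem_image.1 hm
    obtain ⟨rfl, hlt⟩ := hS k hk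
    have hsqrt : |α * k.1| ≤ √(E - (k.2.natAbs : ℝ) ^ 2) := abs_le_sqrt <| by
      rw [Nat.cast_natAbs, Int.cast_abs, sq_abs]
      linarith
    rwa [abs_mul, abs_of_pos hα, ← le_div_iff₀' hα] at hsqrt
  have hcard : (S.card : ℝ) ≤ (S.image Prod.fst).card * 2 := by
    exact_mod_cast (Finset.card_le_card hsub).trans
      (Finset.card_product _ _ ▸ Nat.mul_le_mul_left _ Finset.card_le_two)
  calc α * S.card ≤ α * ((2 * (√(E - (n : ℝ) ^ 2) / α) + 1) * 2) := by
        gcongr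
        refine hcard.trans ?_
        gcongr
        exact card_le_two_mul_add_one_of_abs_le (by positivity) hfst
    _ = 2 * (2 * √(E - (n : ℝ) ^ 2) + α) := by field_simp

theorem mul_card_le_of_sq_add_sq_lt {α E : ℝ} (hα0 : 0 < α) (hα1 : α ≤ 1) (hE : 0 ≤ E)
    {S : Finset (ℤ × ℤ)} (hS : ∀ k ∈ S, k.2 ≠ 0 ∧ (α * k.1) ^ 2 + (k.2 : ℝ) ^ 2 < E) :
    α * S.card ≤ 3.44 * E := by
  have hrow : ∀ k ∈ S, k.2.natAbs ∈ Finset.Icc 1 ⌊√E⌋₊ := fun k hk => by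
    obtain ⟨hne, hlt⟩ := hS k hk
    refine Finset.mem_Icc.2 ⟨Int.natAbs_pos.2 hne, Nat.le_floor (le_sqrt_of_sq_le ?_)⟩
    rw [Nat.cast_natAbs, Int.cast_abs, sq_abs]
    linarith [sq_nonneg (α * k.1)]
  have hfloor : (⌊√E⌋₊ : ℝ) ^ 2 ≤ E :=
    (pow_le_pow_left₀ (Nat.cast_nonneg _) (Nat.floor_le (sqrt_nonneg E)) 2).trans_eq (sq_sqrt hE)
  calc α * S.card = ∑ n ∈ Finset.Icc 1 ⌊√E⌋₊, α * (S.filter (·.2.natAbs = n)).card := by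
        rw [Finset.card_eq_sum_card_fiberwise hrow, Nat.cast_sum, Finset.mul_sum]
    _ ≤ ∑ n ∈ Finset.Icc 1 ⌊√E⌋₊, 2 * (2 * √(E - (n : ℝ) ^ 2) + 1) :=
        Finset.sum_le_sum fun n _ => (mul_card_le_of_natAbs_eq hα0 fun k hk =>
          ⟨(Finset.mem_filter.1 hk).2, (hS k (Finset.mem_filter.1 hk).1).2⟩).trans (by gcongr)
    _ = 2 * ∑ n ∈ Finset.Icc 1 ⌊√E⌋₊, (2 * √(E - (n : ℝ) ^ 2) + 1) := (Finset.mul_sum ..).symm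
    _ ≤ 2 * (1.72 * E) := by gcongr; exact sum_two_mul_sqrt_sub_sq_add_one_le_mul hfloor
    _ = 3.44 * E := by ring

theorem torusEigenvalue_two_pi_div {α : ℝ} (k : ℤ × ℤ) :
    torusEigenvalue (2 * π / α) (2 * π) k = (α * k.1) ^ 2 + (k.2 : ℝ) ^ 2 := by
  rw [torusEigenvalue, div_div_eq_mul_div]
  field_simp

theorem card_le_of_torusEigenvalue_lt {α E : ℝ} (hα0 : 0 < α) (hα1 : α ≤ 1) (hE : 0 ≤ E)
    {S : Finset {k : ℤ × ℤ | k.2 ≠ 0}}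
    (hS : ∀ k ∈ S, torusEigenvalue (2 * π / α) (2 * π) k < E) :
    S.card ≤ π ^ 3 / (9 * α) * E := by
  have hcard : α * S.card ≤ 3.44 * E := by
    rw [← S.card_map (Function.Embedding.subtype _)]
    refine mul_card_le_of_sq_add_sq_lt hα0 hα1 hE fun l hl => ?_
    obtain ⟨k, hk, rfl⟩ := Finset.mem_map.1 hl
    exact ⟨k.2, torusEigenvalue_two_pi_div (α := α) k ▸ hS k hk⟩
  have hpi : 9 * 3.44 ≤ π ^ 3 := calc
    (9 * 3.44 : ℝ) ≤ 3.1415 ^ 3 := by norm_num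
    _ ≤ π ^ 3 := by gcongr; exact pi_gt_d4.le
  calc (S.card : ℝ) = α * S.card / α := by field_simp
    _ ≤ 3.44 * E / α := by gcongr
    _ ≤ π ^ 3 / 9 * E / α := by gcongr; linarith
    _ = π ^ 3 / (9 * α) * E := by ring

end LatticeCount

theorem stmt_2 (α : ℝ) (hα0 : 0 < α) (hα1 : α ≤ 1)
    (N : ℕ) (φ : Fin N → ℝ × ℝ → ℝ)
    (hC1 : ∀ j, ContDiff ℝ 1 (φ j))
    (hper1 : ∀ j (x : ℝ × ℝ), φ j (x.1 + 2 * π / α, x.2) = φ j x)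
    (hper2 : ∀ j (x : ℝ × ℝ), φ j (x.1, x.2 + 2 * π) = φ j x)
    (hmean : ∀ j (x₁ : ℝ), (∫ t in (0:ℝ)..(2 * π), φ j (x₁, t)) = 0)
    (hortho : ∀ i j, (∫ x in Set.Ioc (0:ℝ) (2 * π / α) ×ˢ Set.Ioc (0:ℝ) (2 * π),
        φ i x * φ j x) = if i = j then 1 else 0) :
    (∫ x in Set.Ioc (0:ℝ) (2 * π / α) ×ˢ Set.Ioc (0:ℝ) (2 * π),
        (∑ j, φ j x ^ 2) ^ 2) ≤
      (π / 6) * ∑ j, ∫ x in Set.Ioc (0:ℝ) (2 * π / α) ×ˢ Set.Ioc (0:ℝ) (2 * π),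
        (pd1 (φ j) x ^ 2 + pd2 (φ j) x ^ 2) := by
  have hA : 0 < 2 * π / α := by positivity
  have hB : 0 < 2 * π := by positivity
  have hconst : π / 6 = 6 * (π ^ 3 / (9 * α) / (2 * π / α * (2 * π))) := by
    field_simp
    norm_num
  rw [hconst]
  exact integral_torus_density_sq_le_of_card_le (Λ := {k | k.2 ≠ 0}) hA hB hC1
    (fun j y => by simpa using hper1 j (0, y)) (fun j x => by simpa using hper2 j (x, 0)) hortho
    (fun j k hk => torusCoeff_eq_zero_of_integral_snd_eq_zero k hA.le hB.le (hC1 j).continuous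
      (hmean j) (not_not.1 hk)) (by positivity)
    fun E hE S hS => card_le_of_torusEigenvalue_lt hα0 hα1 hE.le hS
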